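/- arXiv:2007.10864 — 2 statements merged into one kernel-verified Lean document; each statement's English description precedes it below -/
import Mathlib

section
/- Let (X,d,μ) be a space of homogeneous type, let p(·) be an exponent function, and let w ∈ A_{p(·)}. Then there exists a constant C depending on p(·) and w such that for every quasi-metric ball B and every measurable set E ⊆ B, μ(E)/μ(B) ≤ C ‖w χ_E‖_{p(·)} / ‖w χ_B‖_{p(·)}. -/
open MeasureTheory ENNReal NNReal Filter

namespace SHT

variable {X : Type*} [MeasurableSpace X]

/-- The quasi-metric ball `B(x,r) = {y | d x y < r}`. -/
def ball (d : X → X → ℝ) (x : X) (r : ℝ) : Set X := {y | d x y < r}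

/-- `(X, d, μ)` is a space of homogeneous type with quasi-metric constant `A₀`
and doubling constant `Cμ`. -/
structure IsSHT (d : X → X → ℝ) (μ : Measure X) (A₀ Cμ : ℝ) : Prop where
  d_nonneg : ∀ x y, 0 ≤ d x y
  d_eq_zero_iff : ∀ x y, d x y = 0 ↔ x = y
  d_symm : ∀ x y, d x y = d y x
  one_le_A₀ : 1 ≤ A₀
  d_triangle : ∀ x y z, d x y ≤ A₀ * (d x z + d z y)
  one_le_Cμ : 1 ≤ Cμ
  measurableSet_ball : ∀ x r, MeasurableSet (ball d x r)
  ball_pos : ∀ x r, 0 < r → 0 < μ (ball d x r)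
  ball_ne_top : ∀ x r, 0 < r → μ (ball d x r) ≠ ⊤
  doubling : ∀ x r, 0 < r → μ (ball d x (2 * r)) ≤ ENNReal.ofReal Cμ * μ (ball d x r)

/-- The modular `ρ_{p(·)}(f) = ∫_{X ∖ X_∞} f(x)^{p(x)} dμ + ‖f‖_{L^∞(X_∞)}`
for an (extended-real valued) exponent `p` and a nonnegative function `f`. -/
noncomputable def modular (μ : Measure X) (p : X → ℝ≥0∞) (f : X → ℝ≥0∞) : ℝ≥0∞ :=
  (∫⁻ x in {x | p x ≠ ⊤}, f x ^ (p x).toReal ∂μ) + essSup f (μ.restrict {x | p x = ⊤})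

/-- The Luxemburg norm `‖f‖_{p(·)} = inf {λ > 0 | ρ_{p(·)}(f/λ) ≤ 1}`. -/
noncomputable def luxNorm (μ : Measure X) (p : X → ℝ≥0∞) (f : X → ℝ≥0∞) : ℝ≥0∞ :=
  sInf {lam : ℝ≥0∞ | 0 < lam ∧ modular μ p (fun x => f x / lam) ≤ 1}

/-- The pointwise conjugate exponent `p'(x) = p(x)/(p(x)-1)`, with the conventions
`p'(x) = ∞` if `p(x) = 1` and `p'(x) = 1` if `p(x) = ∞`. -/
noncomputable def conjExp (p : X → ℝ≥0∞) : X → ℝ≥0∞ := fun x =>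
  if p x = ⊤ then 1 else p x / (p x - 1)

/-- A real-valued exponent function viewed as an extended-real valued one. -/
noncomputable def ofRealExp (p : X → ℝ) : X → ℝ≥0∞ := fun x => ENNReal.ofReal (p x)

/-- Local log-Hölder continuity of an exponent function. -/
def LH0 (d : X → X → ℝ) (p : X → ℝ) : Prop :=
  ∃ C₀ : ℝ, 0 < C₀ ∧ ∀ x y, 0 < d x y → d x y < 1 / 2 →
    |p x - p y| ≤ C₀ / (-Real.log (d x y))

/-- Log-Hölder continuity at infinity, with respect to the base point `x₀`
and with limit value `pinf`. -/
def LHinf (d : X → X → ℝ) (x₀ : X) (p : X → ℝ) (pinf : ℝ) : Prop :=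
  ∃ Cinf : ℝ, 0 < Cinf ∧ ∀ x, |p x - pinf| ≤ Cinf / Real.log (Real.exp 1 + d x x₀)

/-- Global log-Hölder continuity. -/
def LH (d : X → X → ℝ) (x₀ : X) (p : X → ℝ) : Prop :=
  LH0 d p ∧ ∃ pinf : ℝ, LHinf d x₀ p pinf

/-- `w` is a weight: measurable, positive and finite a.e., and locally integrable. -/
def IsWeight (d : X → X → ℝ) (μ : Measure X) (w : X → ℝ≥0∞) : Prop :=
  Measurable w ∧ (∀ᵐ x ∂μ, 0 < w x ∧ w x < ⊤) ∧
    ∀ (x : X) (r : ℝ), 0 < r → (∫⁻ y in ball d x r, w y ∂μ) ≠ ⊤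

/-- The variable Muckenhoupt condition `w ∈ A_{p(·)}`:
`‖w χ_B‖_{p(·)} ‖w⁻¹ χ_B‖_{p'(·)} ≤ K μ(B)` for all quasi-metric balls `B`. -/
def Apvar (d : X → X → ℝ) (μ : Measure X) (p : X → ℝ≥0∞) (w : X → ℝ≥0∞) : Prop :=
  ∃ K : ℝ≥0, ∀ (x : X) (r : ℝ), 0 < r →
    luxNorm μ p ((ball d x r).indicator w) *
      luxNorm μ (conjExp p) ((ball d x r).indicator fun y => (w y)⁻¹) ≤ K * μ (ball d x r)

/-- The uncentered Hardy–Littlewood maximal operator over quasi-metric balls. -/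
noncomputable def maximal (d : X → X → ℝ) (μ : Measure X) (f : X → ℝ≥0∞) (x : X) : ℝ≥0∞ :=
  ⨆ (z : X) (r : ℝ) (_ : 0 < r ∧ x ∈ ball d z r),
    (μ (ball d z r))⁻¹ * ∫⁻ y in ball d z r, f y ∂μ

/-- `f ∈ L^{p(·)}`: the modular of `f/λ` is finite for some `λ > 0`. -/
def MemLpvar (μ : Measure X) (p : X → ℝ≥0∞) (f : X → ℝ≥0∞) : Prop :=
  ∃ lam : ℝ≥0∞, 0 < lam ∧ modular μ p (fun x => f x / lam) < ⊤

/-!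
Hölder's inequality for the Luxemburg norm, applied to `w χ_E` and `w⁻¹ χ_B`, gives
`μ(E) ≤ 2 ‖w χ_E‖_{p(·)} ‖w⁻¹ χ_B‖_{p'(·)}`, and the Muckenhoupt condition bounds the last factor by
`K μ(B) / ‖w χ_B‖_{p(·)}`. This division is legitimate because both norms over `B` are nonzero (the
Luxemburg norm is definite) and have a finite product.
-/

section LuxemburgNorm

variable {μ : Measure X} {p q f g : X → ℝ≥0∞}

omit [MeasurableSpace X] in
lemma conjExp_eq_conjExponent (x : X) (hp : 1 ≤ p x) :
    conjExp p x = (p x).conjExponent := by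
  unfold conjExp ENNReal.conjExponent
  split_ifs with hx
  · simp [hx]
  · nth_rewrite 1 [← tsub_add_cancel_of_le hp]
    rw [ENNReal.add_div, one_div]
    obtain h | h := eq_or_ne (p x - 1) 0
    · simp [h]
    · rw [ENNReal.div_self h (ENNReal.sub_ne_top hx)]

omit [MeasurableSpace X] in
lemma holderConjugate_conjExp (x : X) (hp : 1 ≤ p x) : (p x).HolderConjugate (conjExp p x) :=
  conjExp_eq_conjExponent x hp ▸ HolderConjugate.conjExponent hp

omit [MeasurableSpace X] in
lemma one_le_conjExp (x : X) (hp : 1 ≤ p x) : 1 ≤ conjExp p x :=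
  conjExp_eq_conjExponent x hp ▸ le_self_add

lemma measurable_conjExp (hp : Measurable p) : Measurable (conjExp p) :=
  .ite (hp (measurableSet_singleton ⊤)) measurable_const (hp.div (hp.sub_const 1))

lemma modular_const_mul_le (hp : Measurable p) (hp1 : ∀ x, 1 ≤ p x) {c : ℝ≥0∞} (hc : c ≤ 1) :
    modular μ p (fun x => c * f x) ≤ c * modular μ p f := by
  have mul_rpow_le {x : X} (hx : p x ≠ ⊤) :
      (c * f x) ^ (p x).toReal ≤ c * f x ^ (p x).toReal := by
    have one_le : 1 ≤ (p x).toReal := ENNReal.toReal_mono hx (hp1 x)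
    rw [ENNReal.mul_rpow_of_nonneg _ _ ENNReal.toReal_nonneg]
    gcongr
    exact ENNReal.rpow_le_self_of_le_one hc one_le
  unfold modular
  rw [mul_add, ENNReal.essSup_const_mul,
    ← lintegral_const_mul' _ _ (ne_top_of_le_ne_top one_ne_top hc)]
  gcongr ?_ + _
  exact setLIntegral_mono' (hp (measurableSet_singleton ⊤)).compl fun x hx => mul_rpow_le hx

lemma exists_modular_div_le_one_of_luxNorm_lt {c : ℝ≥0∞} (h : luxNorm μ p f < c) :
    ∃ l, 0 < l ∧ l < c ∧ modular μ p (fun x => f x / l) ≤ 1 := by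
  obtain ⟨l, ⟨hl₀, hl⟩, hlc⟩ := sInf_lt_iff.1 h
  exact ⟨l, hl₀, hlc, hl⟩

lemma modular_le_of_luxNorm_lt (hp : Measurable p) (hp1 : ∀ x, 1 ≤ p x) {c : ℝ≥0∞} (hc : c ≤ 1)
    (h : luxNorm μ p f < c) : modular μ p f ≤ c := by
  obtain ⟨l, hl₀, hlc, hl⟩ := exists_modular_div_le_one_of_luxNorm_lt h
  calc modular μ p f = modular μ p fun x => l * (f x / l) := by
        simp only [ENNReal.mul_div_cancel hl₀.ne' hlc.ne_top]
    _ ≤ l * modular μ p fun x => f x / l := modular_const_mul_le hp hp1 (hlc.le.trans hc)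
    _ ≤ c := mul_le_of_le_of_le_one hlc.le hl

lemma ae_eq_zero_of_modular_eq_zero (hp : Measurable p) (hf : AEMeasurable f μ)
    (h : modular μ p f = 0) : f =ᵐ[μ] 0 := by
  obtain ⟨hint, hsup⟩ := add_eq_zero.1 h
  rw [lintegral_eq_zero_iff' (hf.pow hp.ennreal_toReal.aemeasurable).restrict] at hint
  filter_upwards [ae_imp_of_ae_restrict hint,
    ae_imp_of_ae_restrict (ENNReal.essSup_eq_zero_iff.1 hsup)] with x hfin htop
  by_cases hx : p x = ⊤
  · exact htop hx
  · exact (ENNReal.rpow_eq_zero_iff.1 (hfin hx)).elim (·.1) fun h' =>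
      absurd h'.2 ENNReal.toReal_nonneg.not_gt

lemma ae_eq_zero_of_luxNorm_eq_zero (hp : Measurable p) (hp1 : ∀ x, 1 ≤ p x)
    (hf : AEMeasurable f μ) (h : luxNorm μ p f = 0) : f =ᵐ[μ] 0 := by
  refine ae_eq_zero_of_modular_eq_zero hp hf (le_antisymm ?_ zero_le)
  refine le_of_forall_gt_imp_ge_of_dense fun c hc => ?_
  have hmin : luxNorm μ p f < min c 1 := h ▸ lt_min hc one_pos
  exact (modular_le_of_luxNorm_lt hp hp1 (min_le_right c 1) hmin).trans (min_le_left c 1)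

lemma luxNorm_indicator_ne_zero (hp : Measurable p) (hp1 : ∀ x, 1 ≤ p x) (hf : AEMeasurable f μ)
    (hpos : ∀ᵐ x ∂μ, f x ≠ 0) {B : Set X} (hB : MeasurableSet B) (hμB : μ B ≠ 0) :
    luxNorm μ p (B.indicator f) ≠ 0 := by
  intro h
  refine hμB (measure_eq_zero_iff_ae_notMem.2 ?_)
  filter_upwards [ae_eq_zero_of_luxNorm_eq_zero hp hp1 (hf.indicator hB) h, hpos]
    with x hzero hfx hxB
  exact hfx ((Set.indicator_of_mem hxB f).symm.trans hzero)

lemma ae_le_of_modular_le {c : ℝ≥0∞} (h : modular μ p f ≤ c) : ∀ᵐ x ∂μ, p x = ⊤ → f x ≤ c := by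
  filter_upwards [ae_imp_of_ae_restrict (ENNReal.ae_le_essSup f)] with x hx hpx
  exact (hx hpx).trans (le_add_self.trans h)

lemma lintegral_indicator_rpow_le_modular (μ : Measure X) (p f : X → ℝ≥0∞) :
    ∫⁻ x, {x | p x ≠ ⊤}.indicator (fun x => f x ^ (p x).toReal) x ∂μ ≤ modular μ p f :=
  (lintegral_indicator_le _ _).trans le_self_add

lemma mul_le_rpow_add_rpow {a b s t : ℝ≥0∞} [a.HolderConjugate b] (ha : a ≠ ⊤) (hb : b ≠ ⊤) :
    s * t ≤ s ^ a.toReal + t ^ b.toReal := by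
  have one_le_ofReal {c : ℝ≥0∞} (hc : c ≠ ⊤) (h : 1 ≤ c) : 1 ≤ ENNReal.ofReal c.toReal := by
    rwa [ENNReal.ofReal_toReal hc]
  calc s * t ≤ s ^ a.toReal / ENNReal.ofReal a.toReal + t ^ b.toReal / ENNReal.ofReal b.toReal :=
        ENNReal.young_inequality s t (HolderConjugate.toReal_of_ne_top ha hb)
    _ ≤ s ^ a.toReal + t ^ b.toReal := by
        gcongr
        · exact ENNReal.div_le_of_le_mul
            (le_mul_of_one_le_right' (one_le_ofReal ha (HolderConjugate.one_le a b)))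
        · exact ENNReal.div_le_of_le_mul
            (le_mul_of_one_le_right' (one_le_ofReal hb (HolderConjugate.one_le b a)))

lemma lintegral_mul_le_modular_add_modular (hp : Measurable p)
    (hpq : ∀ x, (p x).HolderConjugate (q x)) (hf : AEMeasurable f μ)
    (hf1 : modular μ p f ≤ 1) (hg1 : modular μ q g ≤ 1) :
    ∫⁻ x, f x * g x ∂μ ≤ modular μ p f + modular μ q g := by
  let F := {x | p x ≠ ⊤}.indicator fun x => f x ^ (p x).toReal
  let G := {x | q x ≠ ⊤}.indicator fun x => g x ^ (q x).toReal
  have young : ∀ᵐ x ∂μ, f x * g x ≤ F x + G x := by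
    filter_upwards [ae_le_of_modular_le hf1, ae_le_of_modular_le hg1] with x hfx hgx
    have := hpq x
    by_cases hpx : p x = ⊤
    · have hqx : q x = 1 := (HolderConjugate.eq_top_iff_eq_one (p x) (q x)).1 hpx
      simpa [F, G, hpx, hqx] using mul_le_mul_left (hfx hpx) (g x)
    by_cases hqx : q x = ⊤
    · have hpx' : p x = 1 := (HolderConjugate.eq_top_iff_eq_one (q x) (p x)).1 hqx
      simpa [F, G, hpx', hqx] using mul_le_mul_right (hgx hqx) (f x)
    · simpa [F, G, hpx, hqx] using mul_le_rpow_add_rpow (s := f x) (t := g x) hpx hqx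
  have hF : AEMeasurable F μ :=
    (hf.pow hp.ennreal_toReal.aemeasurable).indicator (hp (measurableSet_singleton ⊤)).compl
  calc ∫⁻ x, f x * g x ∂μ ≤ ∫⁻ x, F x + G x ∂μ := lintegral_mono_ae young
    _ = ∫⁻ x, F x ∂μ + ∫⁻ x, G x ∂μ := lintegral_add_left' hF G
    _ ≤ modular μ p f + modular μ q g :=
        add_le_add (lintegral_indicator_rpow_le_modular μ p f)
          (lintegral_indicator_rpow_le_modular μ q g)

lemma lintegral_mul_le_of_luxNorm_lt (hp : Measurable p)
    (hpq : ∀ x, (p x).HolderConjugate (q x)) (hf : AEMeasurable f μ) {a b : ℝ≥0∞}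
    (ha : luxNorm μ p f < a) (hb : luxNorm μ q g < b) :
    ∫⁻ x, f x * g x ∂μ ≤ 2 * (a * b) := by
  obtain ⟨k, hk₀, hka, hk⟩ := exists_modular_div_le_one_of_luxNorm_lt ha
  obtain ⟨l, hl₀, hlb, hl⟩ := exists_modular_div_le_one_of_luxNorm_lt hb
  have normalized : ∫⁻ x, f x / k * (g x / l) ∂μ ≤ 2 :=
    calc ∫⁻ x, f x / k * (g x / l) ∂μ
        ≤ modular μ p (fun x => f x / k) + modular μ q (fun x => g x / l) :=
          lintegral_mul_le_modular_add_modular hp hpq (hf.div_const k) hk hl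
      _ ≤ 2 := one_add_one_eq_two (R := ℝ≥0∞) ▸ add_le_add hk hl
  calc ∫⁻ x, f x * g x ∂μ = ∫⁻ x, k * l * (f x / k * (g x / l)) ∂μ := by
        simp only [mul_mul_mul_comm k l, ENNReal.mul_div_cancel hk₀.ne' hka.ne_top,
          ENNReal.mul_div_cancel hl₀.ne' hlb.ne_top]
    _ = k * l * ∫⁻ x, f x / k * (g x / l) ∂μ :=
        lintegral_const_mul' _ _ (ENNReal.mul_ne_top hka.ne_top hlb.ne_top)
    _ ≤ a * b * 2 := by gcongr
    _ = 2 * (a * b) := mul_comm _ _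

lemma lintegral_mul_eq_zero_of_luxNorm_eq_zero (hp : Measurable p) (hp1 : ∀ x, 1 ≤ p x)
    (hf : AEMeasurable f μ) (h : luxNorm μ p f = 0) : ∫⁻ x, f x * g x ∂μ = 0 := by
  refine lintegral_eq_zero_of_ae_eq_zero ?_
  filter_upwards [ae_eq_zero_of_luxNorm_eq_zero hp hp1 hf h] with x hx
  exact mul_eq_zero_of_left hx (g x)

lemma lintegral_mul_le_two_mul_luxNorm_mul_luxNorm (hp : Measurable p) (hq : Measurable q)
    (hpq : ∀ x, (p x).HolderConjugate (q x)) (hf : AEMeasurable f μ) (hg : AEMeasurable g μ) :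
    ∫⁻ x, f x * g x ∂μ ≤ 2 * (luxNorm μ p f * luxNorm μ q g) := by
  obtain hf₀ | hf₀ := eq_or_ne (luxNorm μ p f) 0
  · have hp1 (x : X) : 1 ≤ p x := have := hpq x; HolderConjugate.one_le (p x) (q x)
    exact (lintegral_mul_eq_zero_of_luxNorm_eq_zero hp hp1 hf hf₀).trans_le zero_le
  obtain hg₀ | hg₀ := eq_or_ne (luxNorm μ q g) 0
  · have hq1 (x : X) : 1 ≤ q x := have := hpq x; HolderConjugate.one_le (q x) (p x)
    simp only [mul_comm (f _)]
    exact (lintegral_mul_eq_zero_of_luxNorm_eq_zero hq hq1 hg hg₀).trans_le zero_le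
  rw [← ENNReal.div_le_iff' two_ne_zero ENNReal.ofNat_ne_top]
  refine ENNReal.le_mul_of_forall_lt (.inl hf₀) (.inr hg₀) fun a ha b hb => ?_
  rw [ENNReal.div_le_iff' two_ne_zero ENNReal.ofNat_ne_top]
  exact lintegral_mul_le_of_luxNorm_lt hp hpq hf ha hb

end LuxemburgNorm

section Weight

variable {μ : Measure X} {p w : X → ℝ≥0∞} {B E : Set X}

lemma measure_le_two_mul_luxNorm_indicator_mul (hp : Measurable p) (hp1 : ∀ x, 1 ≤ p x)
    (hw : AEMeasurable w μ) (hw_pos : ∀ᵐ x ∂μ, 0 < w x ∧ w x < ⊤) (hB : MeasurableSet B)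
    (hE : MeasurableSet E) (hEB : E ⊆ B) :
    μ E ≤ 2 * (luxNorm μ p (E.indicator w) *
      luxNorm μ (conjExp p) (B.indicator fun x => (w x)⁻¹)) := by
  have one_le_mul : ∀ᵐ x ∂μ,
      E.indicator 1 x ≤ E.indicator w x * B.indicator (fun x => (w x)⁻¹) x := by
    filter_upwards [hw_pos] with x ⟨hwx₀, hwx⟩
    by_cases hx : x ∈ E
    · simp [hx, hEB hx, ENNReal.mul_inv_cancel hwx₀.ne' hwx.ne]
    · simp [hx]
  calc μ E = ∫⁻ x, E.indicator 1 x ∂μ := (lintegral_indicator_one hE).symm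
    _ ≤ ∫⁻ x, E.indicator w x * B.indicator (fun x => (w x)⁻¹) x ∂μ := lintegral_mono_ae one_le_mul
    _ ≤ _ := lintegral_mul_le_two_mul_luxNorm_mul_luxNorm hp (measurable_conjExp hp)
        (fun x => holderConjugate_conjExp x (hp1 x)) (hw.indicator hE) (hw.inv.indicator hB)

theorem measure_ratio_le_luxNorm_ratio_general (hp : Measurable p) (hp1 : ∀ x, 1 ≤ p x)
    (hw : AEMeasurable w μ) (hw_pos : ∀ᵐ x ∂μ, 0 < w x ∧ w x < ⊤) (hB : MeasurableSet B)
    (hB₀ : μ B ≠ 0) (hB_top : μ B ≠ ⊤) {K : ℝ≥0}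
    (hK : luxNorm μ p (B.indicator w) *
      luxNorm μ (conjExp p) (B.indicator fun x => (w x)⁻¹) ≤ K * μ B)
    (hE : MeasurableSet E) (hEB : E ⊆ B) :
    μ E / μ B ≤ (2 * K : ℝ≥0) *
      (luxNorm μ p (E.indicator w) / luxNorm μ p (B.indicator w)) := by
  have holder := measure_le_two_mul_luxNorm_indicator_mul hp hp1 hw hw_pos hB hE hEB
  set L := luxNorm μ p (E.indicator w)
  set N := luxNorm μ p (B.indicator w)
  set M := luxNorm μ (conjExp p) (B.indicator fun x => (w x)⁻¹)
  have hN₀ : N ≠ 0 :=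
    luxNorm_indicator_ne_zero hp hp1 hw (hw_pos.mono fun x hx => hx.1.ne') hB hB₀
  have hM₀ : M ≠ 0 :=
    luxNorm_indicator_ne_zero (measurable_conjExp hp) (fun x => one_le_conjExp x (hp1 x)) hw.inv
      (hw_pos.mono fun x hx => ENNReal.inv_ne_zero.2 hx.2.ne) hB hB₀
  have hN_top : N ≠ ⊤ := fun h =>
    ENNReal.mul_ne_top coe_ne_top hB_top (top_unique (by simpa [h, ENNReal.top_mul hM₀] using hK))
  refine ENNReal.div_le_of_le_mul ?_
  calc μ E ≤ 2 * (L * M) := holder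
    _ = 2 * (L / N) * (N * M) := by
        rw [mul_assoc, ← mul_assoc (L / N), ENNReal.div_mul_cancel hN₀ hN_top]
    _ ≤ 2 * (L / N) * (K * μ B) := by gcongr
    _ = (2 * K : ℝ≥0) * (L / N) * μ B := by push_cast; ring

end Weight

theorem measure_ratio_le_luxNorm_ratio
    {X : Type*} [MeasurableSpace X] (d : X → X → ℝ) (μ : Measure X) (A₀ Cμ : ℝ)
    (hX : IsSHT d μ A₀ Cμ)
    (p : X → ℝ≥0∞) (hpmeas : Measurable p) (hp1 : ∀ x, 1 ≤ p x)
    (w : X → ℝ≥0∞) (hw : IsWeight d μ w) (hap : Apvar d μ p w) :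
    ∃ C : ℝ≥0, ∀ (z : X) (rad : ℝ), 0 < rad → ∀ E ⊆ ball d z rad, MeasurableSet E →
      μ E / μ (ball d z rad) ≤
        C * (luxNorm μ p (E.indicator w) / luxNorm μ p ((ball d z rad).indicator w)) := by
  obtain ⟨K, hK⟩ := hap
  exact ⟨2 * K, fun z r hr E hEB hE => measure_ratio_le_luxNorm_ratio_general hpmeas hp1
    hw.1.aemeasurable hw.2.1 (hX.measurableSet_ball z r) (hX.ball_pos z r hr).ne'
    (hX.ball_ne_top z r hr) (hK z r hr) hE hEB⟩

end SHT
end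

section
/- Let (X,d,μ) be a space of homogeneous type and let p(·) be an exponent function with p(·) ∈ LH and p₋ > 1. Then the constant weight 1 belongs to A_{p(·)}; that is, there exists a constant K such that ‖χ_B‖_{p(·)} ‖χ_B‖_{p'(·)} ≤ K μ(B) for every quasi-metric ball B. -/
open MeasureTheory ENNReal NNReal Filter

namespace SHT

variable {X : Type*} [MeasurableSpace X]

/-!
The condition is symmetric under `p ↔ p'`, `s ↔ 1 - s` once it is written in terms of `1 / p`:
it suffices to show `‖χ_B‖_{p(·)} ≲ μ(B) ^ s` for some `s ∈ [0, 1]`, by an argument that only uses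
a bound on `|1 / p - s|`. If `∫_B g ≤ A`, then `g ^ (1 / p) χ_B` has norm at most `A + 1`. So one
looks for such a `g` with `1 / μ(B) ≤ g` and `|1 / p - s| |log g| ≤ T` on `B`: then
`μ(B) ^ (-s) ≤ g ^ s ≤ e ^ T g ^ (1 / p)`, whence `‖χ_B‖_{p(·)} ≤ e ^ T (A + 1) μ(B) ^ s`.

* If `μ(B) ≤ 1`, take `g = 1 / μ(B)` and `s = 1 / p(z)` with `z` the centre of `B`. Doubling gives
  `log (1 / μ(B)) ≲ 1 + log (e + d(x, x₀)) + log (1 + 1 / r)` for every `x ∈ B`; the two logarithms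
  are absorbed by log-Hölder continuity at infinity and local log-Hölder continuity.
* If `μ(B) ≥ 1`, take `g = max (1 / μ(B)) ((e + d(·, x₀)) ^ (-N))` and `s = 1 / p_∞`, with `N` so
  large that the second function is integrable. Then `|log g| ≤ N log (e + d(·, x₀))`.
-/

section LogHolder

omit [MeasurableSpace X]

variable {d : X → X → ℝ} {x₀ : X} {f : X → ℝ} {finf : ℝ}

lemma one_le_log_exp_one_add {t : ℝ} (ht : 0 ≤ t) : 1 ≤ Real.log (Real.exp 1 + t) := by
  rw [Real.le_log_iff_exp_le (by positivity)]
  linarith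

lemma LH0.comp_lipschitzWith {K : ℝ≥0} {φ : ℝ → ℝ} (hf : LH0 d f) (hφ : LipschitzWith K φ) :
    LH0 d (φ ∘ f) := by
  obtain ⟨C, hC, hf⟩ := hf
  refine ⟨max K 1 * C, by positivity, fun x y hpos hlt => ?_⟩
  calc |φ (f x) - φ (f y)| ≤ max K 1 * |f x - f y| := by
        simpa [Real.dist_eq] using (hφ.weaken (le_max_left K 1)).dist_le_mul (f x) (f y)
    _ ≤ max K 1 * (C / -Real.log (d x y)) := by gcongr; exact hf x y hpos hlt
    _ = max K 1 * C / -Real.log (d x y) := by rw [mul_div_assoc]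

lemma LHinf.comp_lipschitzWith {K : ℝ≥0} {φ : ℝ → ℝ} (hf : LHinf d x₀ f finf)
    (hφ : LipschitzWith K φ) : LHinf d x₀ (φ ∘ f) (φ finf) := by
  obtain ⟨C, hC, hf⟩ := hf
  refine ⟨max K 1 * C, by positivity, fun x => ?_⟩
  calc |φ (f x) - φ finf| ≤ max K 1 * |f x - finf| := by
        simpa [Real.dist_eq] using (hφ.weaken (le_max_left K 1)).dist_le_mul (f x) finf
    _ ≤ max K 1 * (C / Real.log (Real.exp 1 + d x x₀)) := by gcongr; exact hf x
    _ = max K 1 * C / Real.log (Real.exp 1 + d x x₀) := by rw [mul_div_assoc]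

lemma LH.comp_lipschitzWith {K : ℝ≥0} {φ : ℝ → ℝ} (hf : LH d x₀ f) (hφ : LipschitzWith K φ) :
    LH d x₀ (φ ∘ f) :=
  ⟨hf.1.comp_lipschitzWith hφ, hf.2.imp' φ fun _ h => h.comp_lipschitzWith hφ⟩

lemma lipschitzWith_inv_max_one : LipschitzWith 1 fun t : ℝ => (max 1 t)⁻¹ := by
  refine LipschitzWith.of_dist_le_mul fun a b => ?_
  have ha : 1 ≤ max 1 a := le_max_left 1 a
  have hb : 1 ≤ max 1 b := le_max_left 1 b
  calc dist (max 1 a)⁻¹ (max 1 b)⁻¹ = dist (max 1 a) (max 1 b) / (max 1 a * max 1 b) := by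
        rw [Real.dist_eq, Real.dist_eq, inv_sub_inv (by positivity) (by positivity), abs_div,
          abs_sub_comm, abs_of_pos (by positivity : 0 < max 1 a * max 1 b)]
    _ ≤ dist (max 1 a) (max 1 b) :=
        div_le_self dist_nonneg (one_le_mul_of_one_le_of_one_le ha hb)
    _ ≤ (1 : ℝ≥0) * dist a b := (LipschitzWith.id.const_max 1).dist_le_mul a b

lemma LH.inv_of_one_le (hf : LH d x₀ f) (hf1 : ∀ x, 1 ≤ f x) : LH d x₀ fun x => (f x)⁻¹ := by
  simpa only [Function.comp_def, max_eq_right (hf1 _)] using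
    hf.comp_lipschitzWith lipschitzWith_inv_max_one

lemma LHinf.exists_mem_Icc {a b : ℝ} (hab : a ≤ b) (hf : LHinf d x₀ f finf)
    (hfab : ∀ x, f x ∈ Set.Icc a b) : ∃ s ∈ Set.Icc a b, LHinf d x₀ f s := by
  refine ⟨Set.projIcc a b hab finf, Subtype.prop _, ?_⟩
  have h := hf.comp_lipschitzWith ((LipschitzWith.subtype_val _).comp (LipschitzWith.projIcc hab))
  simpa only [Function.comp_def, Set.projIcc_of_mem hab (hfab _)] using h

lemma LHinf.exists_abs_sub_mul_log_le (hd : ∀ x y, 0 ≤ d x y) (hf : LHinf d x₀ f finf) :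
    ∃ C, ∀ x, |f x - finf| * Real.log (Real.exp 1 + d x x₀) ≤ C := by
  obtain ⟨C, -, hf⟩ := hf
  refine ⟨C, fun x => (le_div_iff₀ ?_).1 (hf x)⟩
  linarith [one_le_log_exp_one_add (hd x x₀)]

lemma LHinf.exists_abs_sub_mul_min_log_le (hd : ∀ x y, 0 ≤ d x y) (hf : LHinf d x₀ f finf) :
    ∃ C, ∀ x y, |f x - f y| *
      min (Real.log (Real.exp 1 + d x x₀)) (Real.log (Real.exp 1 + d y x₀)) ≤ C := by
  obtain ⟨C, hC⟩ := hf.exists_abs_sub_mul_log_le hd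
  refine ⟨C + C, fun x y => ?_⟩
  set u := Real.log (Real.exp 1 + d x x₀)
  set v := Real.log (Real.exp 1 + d y x₀)
  have hu : 1 ≤ u := one_le_log_exp_one_add (hd x x₀)
  have hv : 1 ≤ v := one_le_log_exp_one_add (hd y x₀)
  calc |f x - f y| * min u v ≤ (|f x - finf| + |f y - finf|) * min u v := by
        gcongr
        exact abs_sub_comm finf (f y) ▸ abs_sub_le (f x) finf (f y)
    _ = |f x - finf| * min u v + |f y - finf| * min u v := add_mul ..
    _ ≤ |f x - finf| * u + |f y - finf| * v := by
        gcongr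
        exacts [min_le_left u v, min_le_right u v]
    _ ≤ C + C := add_le_add (hC x) (hC y)

lemma log_one_add_inv_le_two_mul_neg_log {t : ℝ} (ht : 0 < t) (ht' : t ≤ 1 / 2) :
    Real.log (1 + t⁻¹) ≤ 2 * -Real.log t := by
  have hinv : 2 ≤ t⁻¹ := by simpa using inv_anti₀ ht ht'
  calc Real.log (1 + t⁻¹) ≤ Real.log (t⁻¹ ^ 2) := Real.log_le_log (by positivity) (by nlinarith)
    _ = 2 * -Real.log t := by rw [Real.log_pow, Real.log_inv, Nat.cast_ofNat]

lemma LH0.exists_abs_sub_mul_log_le (hd : ∀ x y, 0 ≤ d x y) (hd₀ : ∀ x y, d x y = 0 → x = y)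
    {D : ℝ} (hf : LH0 d f) (hD : ∀ x y, |f x - f y| ≤ D) :
    ∃ C, ∀ x y r, d x y < r → |f x - f y| * Real.log (1 + r⁻¹) ≤ C := by
  obtain ⟨C, hC, hf⟩ := hf
  refine ⟨max (C * 2) (D * Real.log 3), fun x y r hxy => ?_⟩
  have hr : 0 < r := (hd x y).trans_lt hxy
  rcases lt_or_ge r (1 / 2) with hlt | hge
  · refine le_max_of_le_left ?_
    rcases (hd x y).eq_or_lt with hzero | hpos
    · simp only [hd₀ x y hzero.symm, sub_self, abs_zero, zero_mul]
      positivity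
    · have hlog : 0 < -Real.log (d x y) := neg_pos.2 (Real.log_neg hpos (by linarith))
      calc |f x - f y| * Real.log (1 + r⁻¹)
          ≤ |f x - f y| * (2 * -Real.log (d x y)) := by
            gcongr
            exact (log_one_add_inv_le_two_mul_neg_log hr hlt.le).trans (by gcongr)
        _ = |f x - f y| * -Real.log (d x y) * 2 := by ring
        _ ≤ C * 2 := by
            gcongr
            exact (le_div_iff₀ hlog).1 (hf x y hpos (hxy.trans hlt))
  · refine le_max_of_le_right ?_
    have hinv : r⁻¹ ≤ 2 := by simpa using inv_anti₀ (by norm_num) hge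
    have hlog : 0 ≤ Real.log (1 + r⁻¹) := Real.log_nonneg (by simpa using hr.le)
    have hlog3 : Real.log (1 + r⁻¹) ≤ Real.log 3 := Real.log_le_log (by positivity) (by linarith)
    exact mul_le_mul (hD x y) hlog3 hlog ((abs_nonneg _).trans (hD x y))

end LogHolder

section ReciprocalExponent

omit [MeasurableSpace X]

variable {P : X → ℝ≥0∞} {x : X}

lemma toReal_inv_mem_Icc {a : ℝ≥0∞} (ha : 1 ≤ a) : a⁻¹.toReal ∈ Set.Icc 0 1 :=
  ⟨ENNReal.toReal_nonneg, ENNReal.toReal_le_of_le_ofReal zero_le_one (by simpa using ha)⟩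

lemma toReal_inv_ofRealExp {p : X → ℝ} (hx : 0 ≤ p x) : (ofRealExp p x)⁻¹.toReal = (p x)⁻¹ := by
  rw [ofRealExp, ENNReal.toReal_inv, ENNReal.toReal_ofReal hx]

lemma inv_conjExp (hx : 1 ≤ P x) : (conjExp P x)⁻¹ = 1 - (P x)⁻¹ := by
  by_cases htop : P x = ⊤
  · simp [conjExp, htop]
  · have hpos : P x ≠ 0 := (zero_lt_one.trans_le hx).ne'
    rw [conjExp, if_neg htop, ENNReal.inv_div (.inr htop) (.inr hpos),
      ENNReal.sub_div fun _ _ => hpos, ENNReal.div_self hpos htop, one_div]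

lemma one_le_conjExp_s16 (hx : 1 ≤ P x) : 1 ≤ conjExp P x := by
  rw [← ENNReal.inv_le_one, inv_conjExp hx]
  exact tsub_le_self

lemma toReal_inv_conjExp (hx : 1 ≤ P x) :
    (conjExp P x)⁻¹.toReal = 1 - (P x)⁻¹.toReal := by
  rw [inv_conjExp hx, ENNReal.toReal_sub_of_le (ENNReal.inv_le_one.2 hx) ENNReal.one_ne_top,
    ENNReal.toReal_one]

end ReciprocalExponent

section Luxemburg

variable {μ : Measure X} {P : X → ℝ≥0∞}

-- Where `P x = ⊤` the exponent `(P x)⁻¹.toReal` is `0`, so that `hfg` reads `f x ≤ 1` there.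
lemma modular_div_le {f g : X → ℝ≥0∞} {c : ℝ≥0∞} (hP : Measurable P) (hP1 : ∀ x, 1 ≤ P x)
    (hc : 1 ≤ c) (hfg : ∀ x, f x ≤ g x ^ (P x)⁻¹.toReal) :
    modular μ P (fun x => f x / c) ≤ (∫⁻ x, g x ∂μ + 1) / c := by
  have hfinite : ∀ x, P x ≠ ⊤ → (f x / c) ^ (P x).toReal ≤ g x / c := fun x hx => by
    have hPx : 1 ≤ (P x).toReal := by simpa using ENNReal.toReal_mono hx (hP1 x)
    calc (f x / c) ^ (P x).toReal = f x ^ (P x).toReal / c ^ (P x).toReal :=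
          ENNReal.div_rpow_of_nonneg _ _ (by positivity)
      _ ≤ (g x ^ (P x)⁻¹.toReal) ^ (P x).toReal / c ^ (1 : ℝ) := by
          gcongr
          exact hfg x
      _ = g x / c := by
          rw [ENNReal.toReal_inv, ENNReal.rpow_inv_rpow (by positivity), ENNReal.rpow_one]
  have htop : ∀ x, P x = ⊤ → f x / c ≤ 1 / c := fun x hx => by
    gcongr
    simpa [hx] using hfg x
  have hmeas : MeasurableSet {x | P x = ⊤} := hP (measurableSet_singleton ⊤)
  calc modular μ P (fun x => f x / c) ≤ ∫⁻ x, g x / c ∂μ + 1 / c := by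
        refine add_le_add ?_ ?_
        · exact (setLIntegral_mono' hmeas.compl hfinite).trans (setLIntegral_le_lintegral _ _)
        · exact essSup_le_of_ae_le _ (ae_restrict_of_forall_mem hmeas htop)
    _ = (∫⁻ x, g x ∂μ + 1) / c := by
        simp only [div_eq_mul_inv]
        rw [lintegral_mul_const' _ _ (ENNReal.inv_ne_top.2 (zero_lt_one.trans_le hc).ne'), add_mul]

lemma luxNorm_le_mul_lintegral_add_one {f g : X → ℝ≥0∞} {a : ℝ≥0∞} (hP : Measurable P)
    (hP1 : ∀ x, 1 ≤ P x) (ha₀ : a ≠ 0) (ha : a ≠ ⊤)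
    (hfg : ∀ x, f x ≤ a * g x ^ (P x)⁻¹.toReal) :
    luxNorm μ P f ≤ a * (∫⁻ x, g x ∂μ + 1) := by
  have hfg' : ∀ x, f x / a ≤ g x ^ (P x)⁻¹.toReal := fun x =>
    ENNReal.div_le_of_le_mul' (hfg x)
  refine sInf_le ⟨ENNReal.mul_pos ha₀ (by simp), ?_⟩
  have hdiv : ∀ x, f x / (a * (∫⁻ x, g x ∂μ + 1)) = f x / a / (∫⁻ x, g x ∂μ + 1) := fun x => by
    rw [div_eq_mul_inv, ENNReal.mul_inv (.inl ha₀) (.inl ha), ← mul_assoc, ← div_eq_mul_inv,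
      ← div_eq_mul_inv]
  simp only [hdiv]
  exact (modular_div_le hP hP1 le_add_self hfg').trans ENNReal.div_self_le_one

lemma one_le_exp_mul_rpow_mul_rpow {m s a g T : ℝ} (hm : 0 < m) (hs : 0 ≤ s) (hg : m⁻¹ ≤ g)
    (hT : |a - s| * |Real.log g| ≤ T) : 1 ≤ Real.exp T * m ^ s * g ^ a := by
  have hg₀ : 0 < g := (inv_pos.2 hm).trans_le hg
  have hmg : 1 ≤ (m * g) ^ s := Real.one_le_rpow ((inv_le_iff_one_le_mul₀' hm).1 hg) hs
  have hexp : 1 ≤ Real.exp T * g ^ (a - s) := by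
    rw [Real.rpow_def_of_pos hg₀, ← Real.exp_add, Real.one_le_exp_iff]
    have := neg_abs_le (Real.log g * (a - s))
    rw [abs_mul, mul_comm |_|] at this
    linarith
  calc 1 ≤ Real.exp T * g ^ (a - s) * (m * g) ^ s := one_le_mul_of_one_le_of_one_le hexp hmg
    _ = Real.exp T * m ^ s * (g ^ (a - s) * g ^ s) := by
        rw [Real.mul_rpow hm.le hg₀.le]
        ring
    _ = Real.exp T * m ^ s * g ^ a := by rw [← Real.rpow_add hg₀, sub_add_cancel]

lemma luxNorm_indicator_one_le {B : Set X} {g : X → ℝ} {m s T : ℝ} (hP : Measurable P)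
    (hP1 : ∀ x, 1 ≤ P x) (hB : MeasurableSet B) (hm : 0 < m) (hs : 0 ≤ s)
    (hg : ∀ x ∈ B, m⁻¹ ≤ g x) (hT : ∀ x ∈ B, |(P x)⁻¹.toReal - s| * |Real.log (g x)| ≤ T) :
    luxNorm μ P (B.indicator fun _ => 1) ≤
      ENNReal.ofReal (Real.exp T * m ^ s) * (∫⁻ x in B, ENNReal.ofReal (g x) ∂μ + 1) := by
  rw [← lintegral_indicator hB]
  refine luxNorm_le_mul_lintegral_add_one hP hP1 (ENNReal.ofReal_pos.2 (by positivity)).ne'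
    ENNReal.ofReal_ne_top fun x => ?_
  by_cases hx : x ∈ B
  · have hgx : 0 < g x := (inv_pos.2 hm).trans_le (hg x hx)
    rw [Set.indicator_of_mem hx, Set.indicator_of_mem hx, ENNReal.ofReal_rpow_of_pos hgx,
      ← ENNReal.ofReal_mul (by positivity), ENNReal.one_le_ofReal]
    exact one_le_exp_mul_rpow_mul_rpow hm hs (hg x hx) (hT x hx)
  · simp [hx]

lemma measurable_conjExp_s16 (hP : Measurable P) : Measurable (conjExp P) :=
  Measurable.ite (hP (measurableSet_singleton ⊤)) measurable_const (hP.div (hP.sub_const 1))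

lemma luxNorm_indicator_mul_luxNorm_conjExp_indicator_le {B : Set X} {g : X → ℝ} {s T : ℝ}
    {A : ℝ≥0} (hP : Measurable P) (hP1 : ∀ x, 1 ≤ P x) (hB : MeasurableSet B) (hB₀ : μ B ≠ 0)
    (hBtop : μ B ≠ ⊤) (hs : s ∈ Set.Icc 0 1) (hg : ∀ x ∈ B, (μ.real B)⁻¹ ≤ g x)
    (hT : ∀ x ∈ B, |(P x)⁻¹.toReal - s| * |Real.log (g x)| ≤ T)
    (hA : ∫⁻ x in B, ENNReal.ofReal (g x) ∂μ ≤ A) :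
    luxNorm μ P (B.indicator fun _ => 1) * luxNorm μ (conjExp P) (B.indicator fun _ => 1) ≤
      (((Real.exp T).toNNReal * (A + 1)) ^ 2 : ℝ≥0) * μ B := by
  have hm : 0 < μ.real B := ENNReal.toReal_pos hB₀ hBtop
  have hT' : ∀ x ∈ B, |(conjExp P x)⁻¹.toReal - (1 - s)| * |Real.log (g x)| ≤ T := fun x hx => by
    rw [toReal_inv_conjExp (hP1 x), sub_sub_sub_cancel_left _ _ (1 : ℝ), abs_sub_comm]
    exact hT x hx
  have hnorm := luxNorm_indicator_one_le (μ := μ) hP hP1 hB hm hs.1 hg hT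
  have hnorm' := luxNorm_indicator_one_le (μ := μ) (measurable_conjExp_s16 hP)
    (fun x => one_le_conjExp_s16 (hP1 x)) hB hm (sub_nonneg.2 hs.2) hg hT'
  have hsplit : ENNReal.ofReal (μ.real B ^ s) * ENNReal.ofReal (μ.real B ^ (1 - s)) = μ B := by
    rw [← ENNReal.ofReal_mul (by positivity), ← Real.rpow_add hm, add_sub_cancel, Real.rpow_one,
      ofReal_measureReal hBtop]
  calc luxNorm μ P (B.indicator fun _ => 1) * luxNorm μ (conjExp P) (B.indicator fun _ => 1)
      ≤ ENNReal.ofReal (Real.exp T * μ.real B ^ s) * (A + 1) *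
          (ENNReal.ofReal (Real.exp T * μ.real B ^ (1 - s)) * (A + 1)) := by
        gcongr
        · exact hnorm.trans (by gcongr)
        · exact hnorm'.trans (by gcongr)
    _ = (ENNReal.ofReal (Real.exp T) * (A + 1)) ^ 2 *
          (ENNReal.ofReal (μ.real B ^ s) * ENNReal.ofReal (μ.real B ^ (1 - s))) := by
        rw [ENNReal.ofReal_mul (Real.exp_nonneg T), ENNReal.ofReal_mul (Real.exp_nonneg T)]
        ring
    _ = (((Real.exp T).toNNReal * (A + 1)) ^ 2 : ℝ≥0) * μ B := by
        rw [hsplit]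
        push_cast
        rfl

end Luxemburg

section HomogeneousType

variable {d : X → X → ℝ} {μ : Measure X} {A₀ Cμ : ℝ}

lemma IsSHT.measure_ball_two_pow_mul_le (hX : IsSHT d μ A₀ Cμ) (x : X) {r : ℝ} (hr : 0 < r)
    (n : ℕ) : μ (ball d x (2 ^ n * r)) ≤ ENNReal.ofReal Cμ ^ n * μ (ball d x r) := by
  induction n with
  | zero => simp
  | succ n ih =>
    calc μ (ball d x (2 ^ (n + 1) * r)) = μ (ball d x (2 * (2 ^ n * r))) := by
          rw [pow_succ', mul_assoc]
      _ ≤ ENNReal.ofReal Cμ * μ (ball d x (2 ^ n * r)) := hX.doubling x _ (by positivity)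
      _ ≤ ENNReal.ofReal Cμ * (ENNReal.ofReal Cμ ^ n * μ (ball d x r)) := by gcongr
      _ = ENNReal.ofReal Cμ ^ (n + 1) * μ (ball d x r) := by rw [pow_succ', mul_assoc]

omit [MeasurableSpace X] in
lemma ball_mono {x : X} {r R : ℝ} (h : r ≤ R) : ball d x r ⊆ ball d x R :=
  fun _ hy => lt_of_lt_of_le hy h

lemma IsSHT.measureReal_ball_pos (hX : IsSHT d μ A₀ Cμ) (x : X) {r : ℝ} (hr : 0 < r) :
    0 < μ.real (ball d x r) :=
  ENNReal.toReal_pos (hX.ball_pos x r hr).ne' (hX.ball_ne_top x r hr)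

lemma IsSHT.measureReal_ball_mul_le (hX : IsSHT d μ A₀ Cμ) {Q : ℕ} (hQ : Cμ ≤ 2 ^ Q) (x : X)
    {r t : ℝ} (hr : 0 < r) (ht : 1 ≤ t) :
    μ.real (ball d x (t * r)) ≤ (2 * t) ^ Q * μ.real (ball d x r) := by
  have hCμ := hX.one_le_Cμ
  obtain ⟨n, hn, hn'⟩ := exists_nat_pow_near ht (one_lt_two : (1 : ℝ) < 2)
  calc μ.real (ball d x (t * r)) ≤ μ.real (ball d x (2 ^ (n + 1) * r)) :=
        measureReal_mono (ball_mono (by gcongr)) (hX.ball_ne_top x _ (by positivity))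
    _ ≤ Cμ ^ (n + 1) * μ.real (ball d x r) := by
        have h := ENNReal.toReal_mono
          (ENNReal.mul_ne_top (by finiteness) (hX.ball_ne_top x r hr))
          (hX.measure_ball_two_pow_mul_le x hr (n + 1))
        rwa [ENNReal.toReal_mul, ENNReal.toReal_pow, ENNReal.toReal_ofReal (by linarith)] at h
    _ ≤ (2 ^ Q) ^ (n + 1) * μ.real (ball d x r) := by gcongr
    _ = (2 * 2 ^ n) ^ Q * μ.real (ball d x r) := by rw [pow_right_comm, pow_succ']
    _ ≤ (2 * t) ^ Q * μ.real (ball d x r) := by gcongr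

lemma IsSHT.ball_one_subset_ball_mul (hX : IsSHT d μ A₀ Cμ) (x₀ : X) {x z : X} {r : ℝ}
    (hr : 0 < r) (hx : x ∈ ball d z r) :
    ball d x₀ 1 ⊆ ball d z (A₀ ^ 2 * (Real.exp 1 + d x x₀) * (1 + r⁻¹) * r) := by
  intro y hy
  have hA₀ := hX.one_le_A₀
  have hd := hX.d_nonneg x x₀
  have hexp : 1 ≤ Real.exp 1 := Real.one_le_exp zero_le_one
  calc d z y ≤ A₀ * (d z x + d x y) := hX.d_triangle z y x
    _ < A₀ * (r + d x y) := by gcongr; exact hx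
    _ ≤ A₀ * (r + A₀ * (d x x₀ + d x₀ y)) := by gcongr; exact hX.d_triangle x y x₀
    _ ≤ A₀ * (A₀ * r + A₀ * (d x x₀ + 1)) := by
        gcongr
        exacts [le_mul_of_one_le_left hr.le hA₀, le_of_lt hy]
    _ = A₀ ^ 2 * (1 * r + (1 + d x x₀)) := by ring
    _ ≤ A₀ ^ 2 * ((Real.exp 1 + d x x₀) * r + (Real.exp 1 + d x x₀)) := by
        gcongr
        linarith
    _ = A₀ ^ 2 * (Real.exp 1 + d x x₀) * (1 + r⁻¹) * r := by field_simp

lemma IsSHT.neg_log_measureReal_ball_le (hX : IsSHT d μ A₀ Cμ) {Q : ℕ} (hQ : Cμ ≤ 2 ^ Q)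
    (x₀ : X) {x z : X} {r : ℝ} (hr : 0 < r) (hx : x ∈ ball d z r) :
    -Real.log (μ.real (ball d z r)) ≤
      Q * (Real.log (2 * A₀ ^ 2) + Real.log (Real.exp 1 + d x x₀) + Real.log (1 + r⁻¹)) -
        Real.log (μ.real (ball d x₀ 1)) := by
  have hA₀ := hX.one_le_A₀
  have hd := hX.d_nonneg x x₀
  have hm := hX.measureReal_ball_pos z hr
  set t := A₀ ^ 2 * (Real.exp 1 + d x x₀) * (1 + r⁻¹) with ht
  have ht1 : 1 ≤ t :=
    one_le_mul_of_one_le_of_one_le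
      (one_le_mul_of_one_le_of_one_le (one_le_pow₀ hA₀)
        (by linarith [Real.one_le_exp zero_le_one]))
      (by simpa using hr.le)
  have hmeas : μ.real (ball d x₀ 1) ≤ (2 * t) ^ Q * μ.real (ball d z r) :=
    (measureReal_mono (hX.ball_one_subset_ball_mul x₀ hr hx)
      (hX.ball_ne_top z _ (by positivity))).trans (hX.measureReal_ball_mul_le hQ z hr ht1)
  have hlog := Real.log_le_log (hX.measureReal_ball_pos x₀ one_pos) hmeas
  have hlogt : Real.log (2 * t) =
      Real.log (2 * A₀ ^ 2) + Real.log (Real.exp 1 + d x x₀) + Real.log (1 + r⁻¹) := by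
    rw [ht, ← mul_assoc, ← mul_assoc, Real.log_mul (by positivity) (by positivity),
      Real.log_mul (by positivity) (by positivity)]
  rw [Real.log_mul (by positivity) hm.ne', Real.log_pow, hlogt] at hlog
  linarith

lemma IsSHT.exists_abs_sub_mul_abs_log_measureReal_ball_le (hX : IsSHT d μ A₀ Cμ) {x₀ : X}
    {f : X → ℝ} {D : ℝ} (hf : LH d x₀ f) (hD : ∀ x y, |f x - f y| ≤ D) :
    ∃ T, ∀ z r, 0 < r → μ.real (ball d z r) ≤ 1 → ∀ x ∈ ball d z r,
      |f x - f z| * |Real.log (μ.real (ball d z r))| ≤ T := by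
  obtain ⟨hf₀, finf, hfinf⟩ := hf
  obtain ⟨C₀, hC₀⟩ := hf₀.exists_abs_sub_mul_log_le hX.d_nonneg
    (fun x y => (hX.d_eq_zero_iff x y).1) hD
  obtain ⟨C, hC⟩ := hfinf.exists_abs_sub_mul_min_log_le hX.d_nonneg
  obtain ⟨Q, hQ⟩ := pow_unbounded_of_one_lt Cμ (one_lt_two : (1 : ℝ) < 2)
  set a := Q * Real.log (2 * A₀ ^ 2) + |Real.log (μ.real (ball d x₀ 1))|
  have ha₀ : 0 ≤ a := by
    have := Real.log_nonneg (by nlinarith [hX.one_le_A₀] : 1 ≤ 2 * A₀ ^ 2)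
    positivity
  refine ⟨D * a + Q * (C + C₀), fun z r hr hm x hx => ?_⟩
  set w := min (Real.log (Real.exp 1 + d x x₀)) (Real.log (Real.exp 1 + d z x₀)) with hw
  have hz : z ∈ ball d z r := by
    simpa [ball, (hX.d_eq_zero_iff z z).2 rfl] using hr
  have hlog : |Real.log (μ.real (ball d z r))| ≤ a + Q * (w + Real.log (1 + r⁻¹)) := by
    rw [abs_of_nonpos (Real.log_nonpos measureReal_nonneg hm)]
    have hx' := hX.neg_log_measureReal_ball_le hQ.le x₀ hr hx
    have hz' := hX.neg_log_measureReal_ball_le hQ.le x₀ hr hz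
    have habs := neg_abs_le (Real.log (μ.real (ball d x₀ 1)))
    rcases min_choice (Real.log (Real.exp 1 + d x x₀)) (Real.log (Real.exp 1 + d z x₀)) with h | h
    all_goals
      rw [hw, h]
      linarith
  have hxz : d x z < r := hX.d_symm x z ▸ hx
  calc |f x - f z| * |Real.log (μ.real (ball d z r))|
      ≤ |f x - f z| * (a + Q * (w + Real.log (1 + r⁻¹))) := by gcongr
    _ = |f x - f z| * a + Q * (|f x - f z| * w + |f x - f z| * Real.log (1 + r⁻¹)) := by ring
    _ ≤ D * a + Q * (C + C₀) := by
        gcongr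
        exacts [hD x z, hC x z, hC₀ x z r hxz]

lemma IsSHT.ofReal_inv_pow_le_tsum_indicator_ball (hX : IsSHT d μ A₀ Cμ) (x₀ x : X) (N : ℕ) :
    ENNReal.ofReal ((Real.exp 1 + d x x₀) ^ N)⁻¹ ≤
      ∑' k : ℕ, (ball d x₀ (2 ^ (k + 1))).indicator
        (fun _ => ENNReal.ofReal ((2 ^ k) ^ N)⁻¹) x := by
  have hexp : 1 ≤ Real.exp 1 := Real.one_le_exp zero_le_one
  have hd := hX.d_nonneg x x₀
  obtain ⟨k, hk, hk'⟩ :=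
    exists_nat_pow_near (by linarith : 1 ≤ Real.exp 1 + d x x₀) (one_lt_two : (1 : ℝ) < 2)
  have hx : x ∈ ball d x₀ (2 ^ (k + 1)) := by
    change d x₀ x < 2 ^ (k + 1)
    rw [hX.d_symm]
    linarith
  refine le_trans ?_ (ENNReal.le_tsum k)
  rw [Set.indicator_of_mem hx]
  gcongr

lemma IsSHT.ofReal_inv_pow_mul_measure_ball_two_pow_le (hX : IsSHT d μ A₀ Cμ) (x₀ : X)
    (N k : ℕ) :
    ENNReal.ofReal ((2 ^ k) ^ N)⁻¹ * μ (ball d x₀ (2 ^ (k + 1))) ≤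
      ENNReal.ofReal (Cμ / 2 ^ N) ^ k * (ENNReal.ofReal Cμ * μ (ball d x₀ 1)) := by
  have hCμ := hX.one_le_Cμ
  have hcoeff : ENNReal.ofReal ((2 ^ k) ^ N)⁻¹ * ENNReal.ofReal Cμ ^ (k + 1) =
      ENNReal.ofReal (Cμ / 2 ^ N) ^ k * ENNReal.ofReal Cμ := by
    rw [← ENNReal.ofReal_pow (by positivity), ← ENNReal.ofReal_pow (by positivity),
      ← ENNReal.ofReal_mul (by positivity), ← ENNReal.ofReal_mul (by positivity), div_pow,
      pow_right_comm, pow_succ]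
    congr 1
    ring
  calc ENNReal.ofReal ((2 ^ k) ^ N)⁻¹ * μ (ball d x₀ (2 ^ (k + 1)))
      ≤ ENNReal.ofReal ((2 ^ k) ^ N)⁻¹ * (ENNReal.ofReal Cμ ^ (k + 1) * μ (ball d x₀ 1)) := by
        gcongr
        simpa using hX.measure_ball_two_pow_mul_le x₀ one_pos (k + 1)
    _ = ENNReal.ofReal (Cμ / 2 ^ N) ^ k * (ENNReal.ofReal Cμ * μ (ball d x₀ 1)) := by
        rw [← mul_assoc, hcoeff, mul_assoc]

lemma IsSHT.exists_lintegral_inv_pow_ne_top (hX : IsSHT d μ A₀ Cμ) (x₀ : X) :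
    ∃ N : ℕ, ∫⁻ x, ENNReal.ofReal ((Real.exp 1 + d x x₀) ^ N)⁻¹ ∂μ ≠ ⊤ := by
  obtain ⟨N, hN⟩ := pow_unbounded_of_one_lt Cμ (one_lt_two : (1 : ℝ) < 2)
  set q := ENNReal.ofReal (Cμ / 2 ^ N)
  set M := ENNReal.ofReal Cμ * μ (ball d x₀ 1)
  have hq : q < 1 := by
    rw [ENNReal.ofReal_lt_one, div_lt_one (by positivity)]
    exact hN
  have hM : M ≠ ⊤ := ENNReal.mul_ne_top ENNReal.ofReal_ne_top (hX.ball_ne_top x₀ 1 one_pos)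
  refine ⟨N, ne_top_of_le_ne_top ?_ <| calc
    ∫⁻ x, ENNReal.ofReal ((Real.exp 1 + d x x₀) ^ N)⁻¹ ∂μ
      ≤ ∫⁻ x, ∑' k : ℕ, (ball d x₀ (2 ^ (k + 1))).indicator
          (fun _ => ENNReal.ofReal ((2 ^ k) ^ N)⁻¹) x ∂μ :=
        lintegral_mono fun x => hX.ofReal_inv_pow_le_tsum_indicator_ball x₀ x N
    _ = ∑' k : ℕ, ENNReal.ofReal ((2 ^ k) ^ N)⁻¹ * μ (ball d x₀ (2 ^ (k + 1))) := by
        rw [lintegral_tsum fun k => (measurable_const.indicator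
          (hX.measurableSet_ball x₀ _)).aemeasurable]
        simp only [lintegral_indicator_const (hX.measurableSet_ball x₀ _)]
    _ ≤ ∑' k : ℕ, q ^ k * M :=
        ENNReal.tsum_le_tsum fun k => hX.ofReal_inv_pow_mul_measure_ball_two_pow_le x₀ N k
    _ = (1 - q)⁻¹ * M := by rw [ENNReal.tsum_mul_right, ENNReal.tsum_geometric]⟩
  exact ENNReal.mul_ne_top (ENNReal.inv_ne_top.2 (tsub_pos_of_lt hq).ne') hM

end HomogeneousType

section Muckenhoupt

variable {d : X → X → ℝ} {μ : Measure X} {A₀ Cμ : ℝ} {x₀ : X} {P : X → ℝ≥0∞}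

lemma setLIntegral_inv_measureReal {B : Set X} (hB₀ : μ B ≠ 0) (hB : μ B ≠ ⊤) :
    ∫⁻ _ in B, ENNReal.ofReal (μ.real B)⁻¹ ∂μ = 1 := by
  have hpos : 0 < μ.real B := ENNReal.toReal_pos hB₀ hB
  rw [setLIntegral_const, ENNReal.ofReal_inv_of_pos hpos, ofReal_measureReal hB,
    ENNReal.inv_mul_cancel hB₀ hB]

lemma setLIntegral_max_inv_measureReal_le {B : Set X} (hB₀ : μ B ≠ 0) (hB : μ B ≠ ⊤)
    (h : X → ℝ) :
    ∫⁻ x in B, ENNReal.ofReal (max (μ.real B)⁻¹ (h x)) ∂μ ≤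
      1 + ∫⁻ x, ENNReal.ofReal (h x) ∂μ := by
  calc ∫⁻ x in B, ENNReal.ofReal (max (μ.real B)⁻¹ (h x)) ∂μ
      ≤ ∫⁻ x in B, (ENNReal.ofReal (μ.real B)⁻¹ + ENNReal.ofReal (h x)) ∂μ := by
        refine lintegral_mono fun x => ?_
        rw [ENNReal.ofReal_max]
        exact max_le_add_of_nonneg zero_le zero_le
    _ = 1 + ∫⁻ x in B, ENNReal.ofReal (h x) ∂μ := by
        rw [lintegral_add_left measurable_const, setLIntegral_inv_measureReal hB₀ hB]
    _ ≤ 1 + ∫⁻ x, ENNReal.ofReal (h x) ∂μ := by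
        gcongr
        exact Measure.restrict_le_self

lemma IsSHT.exists_luxNorm_mul_luxNorm_le_of_measureReal_ball_le_one (hX : IsSHT d μ A₀ Cμ)
    (hP : Measurable P) (hP1 : ∀ x, 1 ≤ P x) (hLH : LH d x₀ fun x => (P x)⁻¹.toReal) :
    ∃ K : ℝ≥0, ∀ z r, 0 < r → μ.real (ball d z r) ≤ 1 →
      luxNorm μ P ((ball d z r).indicator fun _ => 1) *
        luxNorm μ (conjExp P) ((ball d z r).indicator fun _ => 1) ≤ K * μ (ball d z r) := by
  have hosc : ∀ x y, |(P x)⁻¹.toReal - (P y)⁻¹.toReal| ≤ 1 := fun x y =>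
    Real.dist_le_of_mem_Icc_01 (toReal_inv_mem_Icc (hP1 x)) (toReal_inv_mem_Icc (hP1 y))
  obtain ⟨T, hT⟩ := hX.exists_abs_sub_mul_abs_log_measureReal_ball_le hLH hosc
  refine ⟨((Real.exp T).toNNReal * (1 + 1)) ^ 2, fun z r hr hm => ?_⟩
  have hB₀ := (hX.ball_pos z r hr).ne'
  have hB := hX.ball_ne_top z r hr
  exact luxNorm_indicator_mul_luxNorm_conjExp_indicator_le hP hP1 (hX.measurableSet_ball z r)
    hB₀ hB (toReal_inv_mem_Icc (hP1 z)) (g := fun _ => (μ.real (ball d z r))⁻¹)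
    (fun _ _ => le_rfl) (by simpa using hT z r hr hm)
    (by simpa using (setLIntegral_inv_measureReal hB₀ hB).le)

lemma abs_log_max_inv_inv_le {a b : ℝ} (ha : 1 ≤ a) (hb : 1 ≤ b) :
    |Real.log (max a⁻¹ b⁻¹)| ≤ Real.log b := by
  have hb₀ : 0 < b⁻¹ := by positivity
  have hlog := Real.log_le_log hb₀ (le_max_right a⁻¹ b⁻¹)
  rw [Real.log_inv] at hlog
  rw [abs_of_nonpos (Real.log_nonpos (by positivity)
    (max_le (inv_le_one_of_one_le₀ ha) (inv_le_one_of_one_le₀ hb)))]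
  linarith

lemma IsSHT.exists_luxNorm_mul_luxNorm_le_of_one_le_measureReal_ball {αinf : ℝ}
    (hX : IsSHT d μ A₀ Cμ) (hP : Measurable P) (hP1 : ∀ x, 1 ≤ P x)
    (hLH : LHinf d x₀ (fun x => (P x)⁻¹.toReal) αinf) :
    ∃ K : ℝ≥0, ∀ z r, 0 < r → 1 ≤ μ.real (ball d z r) →
      luxNorm μ P ((ball d z r).indicator fun _ => 1) *
        luxNorm μ (conjExp P) ((ball d z r).indicator fun _ => 1) ≤ K * μ (ball d z r) := by
  obtain ⟨s, hs, hLHs⟩ := hLH.exists_mem_Icc zero_le_one fun x => toReal_inv_mem_Icc (hP1 x)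
  obtain ⟨C, hC⟩ := hLHs.exists_abs_sub_mul_log_le hX.d_nonneg
  obtain ⟨N, hN⟩ := hX.exists_lintegral_inv_pow_ne_top x₀
  set h : X → ℝ := fun x => ((Real.exp 1 + d x x₀) ^ N)⁻¹
  set J := ∫⁻ x, ENNReal.ofReal (h x) ∂μ
  refine ⟨((Real.exp (N * C)).toNNReal * (1 + J.toNNReal + 1)) ^ 2, fun z r hr hm => ?_⟩
  set B := ball d z r
  have hB₀ : μ B ≠ 0 := (hX.ball_pos z r hr).ne'
  have hB : μ B ≠ ⊤ := hX.ball_ne_top z r hr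
  refine luxNorm_indicator_mul_luxNorm_conjExp_indicator_le hP hP1 (hX.measurableSet_ball z r)
    hB₀ hB hs (g := fun x => max (μ.real B)⁻¹ (h x)) (fun x _ => le_max_left _ _)
    (fun x _ => ?_) ?_
  · have hpow : 1 ≤ (Real.exp 1 + d x x₀) ^ N :=
      one_le_pow₀ (by linarith [hX.d_nonneg x x₀, Real.one_le_exp zero_le_one])
    calc |(P x)⁻¹.toReal - s| * |Real.log (max (μ.real B)⁻¹ (h x))|
        ≤ |(P x)⁻¹.toReal - s| * Real.log ((Real.exp 1 + d x x₀) ^ N) := by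
          gcongr
          exact abs_log_max_inv_inv_le hm hpow
      _ = N * (|(P x)⁻¹.toReal - s| * Real.log (Real.exp 1 + d x x₀)) := by
          rw [Real.log_pow, mul_left_comm]
      _ ≤ N * C := by gcongr; exact hC x
  · rw [ENNReal.coe_add, ENNReal.coe_one, ENNReal.coe_toNNReal hN]
    exact setLIntegral_max_inv_measureReal_le hB₀ hB h

theorem one_mem_Apvar_general (hX : IsSHT d μ A₀ Cμ) (hP : Measurable P) (hP1 : ∀ x, 1 ≤ P x)
    (hLH : LH d x₀ fun x => (P x)⁻¹.toReal) : Apvar d μ P fun _ => 1 := by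
  obtain ⟨K, hK⟩ := hX.exists_luxNorm_mul_luxNorm_le_of_measureReal_ball_le_one hP hP1 hLH
  obtain ⟨-, αinf, hinf⟩ := hLH
  obtain ⟨K', hK'⟩ := hX.exists_luxNorm_mul_luxNorm_le_of_one_le_measureReal_ball hP hP1 hinf
  refine ⟨max K K', fun z r hr => ?_⟩
  simp only [inv_one]
  rcases le_total (μ.real (ball d z r)) 1 with hm | hm
  · exact (hK z r hr hm).trans (by gcongr; exact le_max_left K K')
  · exact (hK' z r hr hm).trans (by gcongr; exact le_max_right K K')

end Muckenhoupt

theorem one_mem_Apvar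
    {X : Type*} [MeasurableSpace X] (d : X → X → ℝ) (μ : Measure X) (A₀ Cμ : ℝ)
    (hX : IsSHT d μ A₀ Cμ) (x₀ : X)
    (p : X → ℝ) (hpmeas : Measurable p) (hp1 : ∀ x, 1 ≤ p x)
    (hLH : LH d x₀ p) (hpminus : 1 < essInf p μ) :
    Apvar d μ (ofRealExp p) fun _ => 1 := by
  refine one_mem_Apvar_general (x₀ := x₀) hX hpmeas.ennreal_ofReal
    (fun x => ENNReal.one_le_ofReal.2 (hp1 x)) ?_
  simpa only [toReal_inv_ofRealExp (zero_le_one.trans (hp1 _))] using hLH.inv_of_one_le hp1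

end SHT
end
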